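/- Lemma 4 (existence of a KKT dual certificate): Let η > 0 and let x* be an optimal solution of the penalized problem (P_η) that satisfies the MFCQ condition. Then there exists an m×m real symmetric positive semidefinite matrix Λ* such that c + 2η(x* − x̌) + Σₖ tr(Kₖ Λ*) eₖ + 2α(Λ*)x* = 0 and Λ*·p(x*, x* x*ᵀ) = 0 (the zero matrix). -/

import Mathlib

/-! The KKT multiplier is obtained from a separation argument. Write `P = p(x*, x*x*ᵀ)`,
`D b = ∑ₖ bₖ (Kₖ + δₖ(x*))` for the derivative of the constraint in direction `b`, and
`g = c + 2η(x* − x̌)` for the gradient of the objective.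

* If `P + D b ≺ 0`, then `g ⬝ b ≥ 0` (`grad_nonneg_of_negDef`): the pencil is quadratic, so
  `p(x* + tb) = (1 - t) P + t (P + D b + t Q)`, which is negative semidefinite for small `t > 0`
  since positive definiteness is an open condition (`isOpen_quadPos`). Hence `x* + tb` is feasible,
  and optimality gives `0 ≤ t (g ⬝ b) + t² η ‖b‖²`.
* Therefore the affine image `{(g ⬝ b, -(P + D b))}` misses the open convex cone of pairs `(r, A)`
  with `r < 0` and `A` positive definite, and Hahn–Banach separates the two
  (`exists_multiplier`). The weight of the separating functional on `r` is nonzero by MFCQ;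
  after normalising it, its matrix part is `-Λ` with `Λ ⪰ 0`. Nonnegativity of an affine function
  of `b` forces its linear part to vanish (stationarity) and gives `tr (P Λ) ≥ 0`, which together
  with `Λ ⪰ 0` and `P ⪯ 0` yields `Λ P = 0`. -/

open Matrix

noncomputable section

/-- Euclidean (ℓ₂) norm of a finite real vector. -/
def vecNorm {k : ℕ} (u : Fin k → ℝ) : ℝ := Real.sqrt (∑ i, u i ^ 2)

/-- The matrix pencil `p(x, X) = F₀ + ∑ₖ xₖ Kₖ + ∑ᵢ ∑ⱼ Xᵢⱼ Lᵢⱼ`. -/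
def pencil {n m : ℕ} (F0 : Matrix (Fin m) (Fin m) ℝ)
    (K : Fin n → Matrix (Fin m) (Fin m) ℝ)
    (L : Fin n → Fin n → Matrix (Fin m) (Fin m) ℝ)
    (x : Fin n → ℝ) (X : Matrix (Fin n) (Fin n) ℝ) : Matrix (Fin m) (Fin m) ℝ :=
  F0 + ∑ k, x k • K k + ∑ i, ∑ j, X i j • L i j

/-- Negative semidefinite real matrix. -/
def NegSemidef' {k : ℕ} (A : Matrix (Fin k) (Fin k) ℝ) : Prop := (-A).PosSemidef

/-- Negative definite real matrix. -/
def NegDef' {k : ℕ} (A : Matrix (Fin k) (Fin k) ℝ) : Prop := (-A).PosDef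

/-- The BMI feasible set `F = {x : p(x, xxᵀ) ⪯ 0}`. -/
def feasSet {n m : ℕ} (F0 : Matrix (Fin m) (Fin m) ℝ)
    (K : Fin n → Matrix (Fin m) (Fin m) ℝ)
    (L : Fin n → Fin n → Matrix (Fin m) (Fin m) ℝ) : Set (Fin n → ℝ) :=
  {x | NegSemidef' (pencil F0 K L x (vecMulVec x x))}

/-- Feasibility distance `d_F(x) = inf {‖x − a‖₂ : a ∈ F}`. -/
def distF {n m : ℕ} (F0 : Matrix (Fin m) (Fin m) ℝ)
    (K : Fin n → Matrix (Fin m) (Fin m) ℝ)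
    (L : Fin n → Fin n → Matrix (Fin m) (Fin m) ℝ) (x : Fin n → ℝ) : ℝ :=
  sInf {r | ∃ a ∈ feasSet F0 K L, r = vecNorm (x - a)}

/-- `δₖ(x) = 2 ∑ᵢ xᵢ L_{k i}`. -/
def deltaMat {n m : ℕ} (L : Fin n → Fin n → Matrix (Fin m) (Fin m) ℝ)
    (k : Fin n) (x : Fin n → ℝ) : Matrix (Fin m) (Fin m) ℝ :=
  (2 : ℝ) • ∑ i, x i • L k i

/-- The MFCQ condition at a point `x`. -/
def MFCQ {n m : ℕ} (F0 : Matrix (Fin m) (Fin m) ℝ)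
    (K : Fin n → Matrix (Fin m) (Fin m) ℝ)
    (L : Fin n → Fin n → Matrix (Fin m) (Fin m) ℝ) (x : Fin n → ℝ) : Prop :=
  ∃ b : Fin n → ℝ,
    NegDef' (pencil F0 K L x (vecMulVec x x) + ∑ k, b k • (K k + deltaMat L k x))

/-- Smallest eigenvalue of a symmetric real matrix, via the Rayleigh quotient. -/
def lambdaMin {k : ℕ} (A : Matrix (Fin k) (Fin k) ℝ) : ℝ :=
  sInf {r | ∃ u : Fin k → ℝ, vecNorm u = 1 ∧ r = u ⬝ᵥ (A *ᵥ u)}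

/-- The G-MFCQ function `s(x)`. -/
def sFun {n m : ℕ} (K : Fin n → Matrix (Fin m) (Fin m) ℝ)
    (L : Fin n → Fin n → Matrix (Fin m) (Fin m) ℝ) (x : Fin n → ℝ) : ℝ :=
  sSup {r | ∃ b : Fin n → ℝ, vecNorm b = 1 ∧
    r = lambdaMin (-(∑ k, b k • (K k + deltaMat L k x)))}

/-- Spectral norm of a real matrix. -/
def specNorm {k : ℕ} (A : Matrix (Fin k) (Fin k) ℝ) : ℝ :=
  sSup {r | ∃ v : Fin k → ℝ, vecNorm v = 1 ∧ r = vecNorm (A *ᵥ v)}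

/-- Pencil norm `‖p‖₂`. -/
def pencilNorm {n m : ℕ} (L : Fin n → Fin n → Matrix (Fin m) (Fin m) ℝ) : ℝ :=
  sSup {r | ∃ u : Fin m → ℝ, vecNorm u = 1 ∧
    r = specNorm (Matrix.of fun i j => u ⬝ᵥ (L i j *ᵥ u))}

/-- Cone `C₁`: positive semidefinite matrices. -/
def coneC1 (n : ℕ) : Set (Matrix (Fin n) (Fin n) ℝ) := {H | H.PosSemidef}

/-- Cone `C₂`: symmetric matrices with `Hᵢᵢ ≥ 0` and `Hᵢᵢ Hⱼⱼ ≥ Hᵢⱼ²`. -/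
def coneC2 (n : ℕ) : Set (Matrix (Fin n) (Fin n) ℝ) :=
  {H | H.IsSymm ∧ ∀ i j, 0 ≤ H i i ∧ H i j ^ 2 ≤ H i i * H j j}

/-- Cone `C₃`: symmetric matrices with `Hᵢᵢ ≥ 0` and `Hᵢᵢ + Hⱼⱼ ≥ 2|Hᵢⱼ|`. -/
def coneC3 (n : ℕ) : Set (Matrix (Fin n) (Fin n) ℝ) :=
  {H | H.IsSymm ∧ ∀ i j, 0 ≤ H i i ∧ 2 * |H i j| ≤ H i i + H j j}

/-- Dual cone with respect to the trace inner product. -/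
def dualCone {n : ℕ} (C : Set (Matrix (Fin n) (Fin n) ℝ)) :
    Set (Matrix (Fin n) (Fin n) ℝ) :=
  {Y | Y.IsSymm ∧ ∀ H ∈ C, 0 ≤ (Y * H).trace}

/-- `α(Λ)` : the n×n matrix with entries `⟨Lᵢⱼ, Λ⟩ = tr(Lᵢⱼ Λ)`. -/
def alphaMat {n m : ℕ} (L : Fin n → Fin n → Matrix (Fin m) (Fin m) ℝ)
    (Λ : Matrix (Fin m) (Fin m) ℝ) : Matrix (Fin n) (Fin n) ℝ :=
  Matrix.of fun i j => (L i j * Λ).trace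

/-- Objective of the penalized problem `(P_η)`. -/
def penObj {n : ℕ} (c xc : Fin n → ℝ) (η : ℝ) (x : Fin n → ℝ) : ℝ :=
  c ⬝ᵥ x + η * vecNorm (x - xc) ^ 2

/-- `x` is an optimal solution of the penalized problem `(P_η)`. -/
def IsOptPen {n m : ℕ} (F0 : Matrix (Fin m) (Fin m) ℝ)
    (K : Fin n → Matrix (Fin m) (Fin m) ℝ)
    (L : Fin n → Fin n → Matrix (Fin m) (Fin m) ℝ)
    (c xc : Fin n → ℝ) (η : ℝ) (x : Fin n → ℝ) : Prop :=
  x ∈ feasSet F0 K L ∧ ∀ y ∈ feasSet F0 K L, penObj c xc η x ≤ penObj c xc η y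

/-- Objective of the penalized convex relaxation `(R_{η,C})`. -/
def relObj {n : ℕ} (c xc : Fin n → ℝ) (η : ℝ) (x : Fin n → ℝ)
    (X : Matrix (Fin n) (Fin n) ℝ) : ℝ :=
  c ⬝ᵥ x + η * (X.trace - 2 * (xc ⬝ᵥ x) + xc ⬝ᵥ xc)

/-- Feasibility for the relaxation with cone `C`. -/
def RelFeasible {n m : ℕ} (F0 : Matrix (Fin m) (Fin m) ℝ)
    (K : Fin n → Matrix (Fin m) (Fin m) ℝ)
    (L : Fin n → Fin n → Matrix (Fin m) (Fin m) ℝ)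
    (C : Set (Matrix (Fin n) (Fin n) ℝ))
    (x : Fin n → ℝ) (X : Matrix (Fin n) (Fin n) ℝ) : Prop :=
  X.IsSymm ∧ NegSemidef' (pencil F0 K L x X) ∧ X - vecMulVec x x ∈ C

/-- `(x, X)` is an optimal solution of the penalized convex relaxation `(R_{η,C})`. -/
def IsOptRel {n m : ℕ} (F0 : Matrix (Fin m) (Fin m) ℝ)
    (K : Fin n → Matrix (Fin m) (Fin m) ℝ)
    (L : Fin n → Fin n → Matrix (Fin m) (Fin m) ℝ)
    (c xc : Fin n → ℝ) (η : ℝ) (C : Set (Matrix (Fin n) (Fin n) ℝ))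
    (x : Fin n → ℝ) (X : Matrix (Fin n) (Fin n) ℝ) : Prop :=
  RelFeasible F0 K L C x X ∧
    ∀ y Y, RelFeasible F0 K L C y Y → relObj c xc η x X ≤ relObj c xc η y Y

/-- The KKT conditions for `(P_η)` at `(x, Λ)`. -/
def KKT {n m : ℕ} (F0 : Matrix (Fin m) (Fin m) ℝ)
    (K : Fin n → Matrix (Fin m) (Fin m) ℝ)
    (L : Fin n → Fin n → Matrix (Fin m) (Fin m) ℝ)
    (c xc : Fin n → ℝ) (η : ℝ)
    (x : Fin n → ℝ) (Λ : Matrix (Fin m) (Fin m) ℝ) : Prop :=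
  Λ.IsSymm ∧ Λ.PosSemidef ∧
  c + (2 * η) • (x - xc) + (∑ k, ((K k * Λ).trace) • (Pi.single k 1 : Fin n → ℝ))
      + (2 : ℝ) • (alphaMat L Λ *ᵥ x) = 0 ∧
  Λ * pencil F0 K L x (vecMulVec x x) = 0


/-- The quadratic form of `A` is positive definite. Unlike `Matrix.PosDef` this does not demand
symmetry, so that it is an open condition in the space of all square matrices. -/
def QuadPos {m : ℕ} (A : Matrix (Fin m) (Fin m) ℝ) : Prop :=
  ∀ v : Fin m → ℝ, v ≠ 0 → 0 < v ⬝ᵥ (A *ᵥ v)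

lemma isOpen_quadPos (m : ℕ) : IsOpen {A : Matrix (Fin m) (Fin m) ℝ | QuadPos A} := by
  -- By homogeneity it suffices to test on the compact unit sphere.
  have h : {A : Matrix (Fin m) (Fin m) ℝ | QuadPos A} =
      {A | ∀ v ∈ Metric.sphere (0 : Fin m → ℝ) 1, 0 < v ⬝ᵥ (A *ᵥ v)} := by
    ext A
    constructor
    · intro hA v hv
      refine hA v ?_
      rintro rfl
      simp at hv
    · intro hA v hv
      have hn : 0 < ‖v‖ := norm_pos_iff.2 hv
      have := hA (‖v‖⁻¹ • v) (by simp [norm_smul, hn.ne'])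
      rw [mulVec_smul, smul_dotProduct, dotProduct_smul, smul_eq_mul, smul_eq_mul] at this
      have h2 : 0 < ‖v‖⁻¹ := inv_pos.2 hn
      exact (mul_pos_iff_of_pos_left h2).1 ((mul_pos_iff_of_pos_left h2).1 this)
  rw [h, isOpen_iff_mem_nhds]
  intro A hA
  refine (isCompact_sphere (0 : Fin m → ℝ) 1).eventually_forall_of_forall_eventually ?_
  intro v hv
  have hc : Continuous fun z : Matrix (Fin m) (Fin m) ℝ × (Fin m → ℝ) =>
      z.2 ⬝ᵥ (z.1 *ᵥ z.2) :=
    continuous_snd.dotProduct (continuous_fst.matrix_mulVec continuous_snd)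
  exact hc.continuousAt.eventually (lt_mem_nhds (hA v hv))

lemma posDef_iff_quadPos {m : ℕ} {A : Matrix (Fin m) (Fin m) ℝ} (hA : A.IsSymm) :
    A.PosDef ↔ QuadPos A := by
  rw [posDef_iff_dotProduct_mulVec]
  simp [hA, QuadPos]

lemma quadPos_one (m : ℕ) : QuadPos (1 : Matrix (Fin m) (Fin m) ℝ) :=
  (posDef_iff_quadPos (by simp [IsSymm])).1 PosDef.one

lemma convex_quadPos (m : ℕ) : Convex ℝ {A : Matrix (Fin m) (Fin m) ℝ | QuadPos A} := by
  intro A hA B hB a b ha hb hab v hv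
  have h1 := hA v hv
  have h2 := hB v hv
  rw [add_mulVec, smul_mulVec, smul_mulVec, dotProduct_add, dotProduct_smul, dotProduct_smul,
    smul_eq_mul, smul_eq_mul]
  rcases ha.eq_or_lt with rfl | ha
  · have : b = 1 := by linarith
    subst this
    linarith
  · have := mul_pos ha h1
    have := mul_nonneg hb h2.le
    linarith

/-- Complementarity: with `A = CᵀC` and `B = EᵀE`, the trace is `‖E Cᵀ‖²` in Frobenius norm. -/
lemma mul_eq_zero_of_trace_nonpos {m : ℕ} {A B : Matrix (Fin m) (Fin m) ℝ}
    (hA : A.PosSemidef) (hB : B.PosSemidef) (h : (A * B).trace ≤ 0) : A * B = 0 := by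
  have key : ∀ {M : Matrix (Fin m) (Fin m) ℝ}, M.PosSemidef →
      ∃ C : Matrix (Fin m) (Fin m) ℝ, M = Cᴴ * C := by
    open scoped MatrixOrder ComplexOrder in
    intro M hM
    exact CStarAlgebra.nonneg_iff_eq_star_mul_self.1 hM.nonneg
  obtain ⟨C, rfl⟩ := key hA
  obtain ⟨E, rfl⟩ := key hB
  have h1 : (Cᴴ * C * (Eᴴ * E)).trace = ((E * Cᴴ)ᴴ * (E * Cᴴ)).trace := by
    rw [conjTranspose_mul, conjTranspose_conjTranspose, Matrix.mul_assoc, trace_mul_comm]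
    simp only [Matrix.mul_assoc]
  have h2 : ((E * Cᴴ)ᴴ * (E * Cᴴ)).trace = 0 :=
    le_antisymm (h1 ▸ h) (posSemidef_conjTranspose_mul_self _).trace_nonneg
  have h3 : E * Cᴴ = 0 := trace_conjTranspose_mul_self_eq_zero_iff.1 h2
  have h4 : C * Eᴴ = 0 := by
    have := congrArg conjTranspose h3
    simpa using this
  calc Cᴴ * C * (Eᴴ * E) = Cᴴ * (C * Eᴴ) * E := by simp only [Matrix.mul_assoc]
    _ = 0 := by rw [h4]; simp

/-- Multiplier rule for the linearised problem: if `b ↦ g ⬝ b` is nonnegative wherever the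
linearised constraint `P + D b ≺ 0` holds strictly, and that constraint is strictly feasible,
then a complementary positive semidefinite multiplier exists. -/
lemma exists_multiplier {n m : ℕ} (P : Matrix (Fin m) (Fin m) ℝ) (hP : P.IsSymm)
    (hPn : (-P).PosSemidef) (D : (Fin n → ℝ) →ₗ[ℝ] Matrix (Fin m) (Fin m) ℝ)
    (hD : ∀ b, (D b).IsSymm) (g : Fin n → ℝ)
    (hg : ∀ b, (-(P + D b)).PosDef → 0 ≤ g ⬝ᵥ b) (b₀ : Fin n → ℝ)
    (hb₀ : (-(P + D b₀)).PosDef) :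
    ∃ Λ : Matrix (Fin m) (Fin m) ℝ, Λ.IsSymm ∧ Λ.PosSemidef ∧
      (∀ b, g ⬝ᵥ b + (D b * Λ).trace = 0) ∧ Λ * P = 0 := by
  have hsym : ∀ b, (-(P + D b)).IsSymm := fun b => (hP.add (hD b)).neg
  obtain ⟨f, u, hfC, hfT⟩ := geometric_hahn_banach_open
    (E := ℝ × Matrix (Fin m) (Fin m) ℝ)
    (s := Set.Iio 0 ×ˢ {A | QuadPos A})
    (t := Set.range fun b => (g ⬝ᵥ b, -(P + D b)))
    ((convex_Iio 0).prod (convex_quadPos m)) (isOpen_Iio.prod (isOpen_quadPos m))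
    (by
      rintro _ ⟨b, rfl⟩ _ ⟨b', rfl⟩ a a' ha ha' haa
      refine ⟨a • b + a' • b', Prod.ext ?_ ?_⟩
      · simp [dotProduct_add, dotProduct_smul]
      · have : P = a • P + a' • P := by rw [← add_smul, haa, one_smul]
        simp only [map_add, map_smul, Prod.snd_add, Prod.smul_snd]
        nth_rewrite 1 [this]
        module)
    (by
      rw [Set.disjoint_left]
      rintro _ ⟨h1, h2⟩ ⟨b, rfl⟩
      have := hg b ((posDef_iff_quadPos (hsym b)).2 h2)
      exact absurd h1 (not_lt.2 this))
  have hfC' : ∀ r A, r < 0 → QuadPos A → f (r, A) < u := fun r A hr hA => hfC (r, A) ⟨hr, hA⟩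
  have hfT' : ∀ b, u ≤ f (g ⬝ᵥ b, -(P + D b)) := fun b => hfT _ ⟨b, rfl⟩
  have h0 := hfC' (-1) 1 (by norm_num) (quadPos_one m)
  have hlin : ∀ (t : ℝ) (r : ℝ) A, f (t * r, t • A) = t * f (r, A) := by
    intro t r A
    rw [← smul_eq_mul, ← smul_eq_mul, ← map_smul]; rfl
  have hadd : ∀ (r s : ℝ) A B, f (r + s, A + B) = f (r, A) + f (s, B) := by
    intro r s A B
    rw [← map_add]; rfl
  -- The separated set is a cone, so the separating level may be taken to be zero.
  have hu : 0 ≤ u := by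
    by_contra! hneg
    have hε : 0 < u / f (-1, 1) := div_pos_of_neg_of_neg hneg (h0.trans hneg)
    have := hfC' (u / f (-1, 1) * (-1)) ((u / f (-1, 1)) • 1) (by linarith) (by
      intro v hv
      rw [smul_mulVec, dotProduct_smul, smul_eq_mul]
      exact mul_pos hε (quadPos_one m v hv))
    rw [hlin, div_mul_cancel₀ _ (h0.trans hneg).ne] at this
    exact lt_irrefl _ this
  have hcl : ∀ r A, r ≤ 0 → (∀ v, 0 ≤ v ⬝ᵥ (A *ᵥ v)) → f (r, A) ≤ 0 := by
    intro r A hr hA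
    by_contra! hpos
    have hN : 0 ≤ (u - f (-1, 1)) / f (r, A) := div_nonneg (by linarith) hpos.le
    have := hfC' ((u - f (-1, 1)) / f (r, A) * r + -1) (((u - f (-1, 1)) / f (r, A)) • A + 1)
      (by nlinarith) (by
        intro v hv
        rw [add_mulVec, smul_mulVec, dotProduct_add, dotProduct_smul, smul_eq_mul]
        have h1 := quadPos_one m v hv
        have h2 := mul_nonneg hN (hA v)
        linarith)
    rw [hadd, hlin, div_mul_cancel₀ _ hpos.ne'] at this
    linarith
  set μ := f (1, 0) with hμ
  have hsplit : ∀ r A, f (r, A) = r * μ + f (0, A) := by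
    intro r A
    rw [hμ, ← hlin, ← hadd]; simp
  have hμ0 : 0 ≤ μ := by
    have := hcl (-1) 0 (by norm_num) (by simp)
    rw [hsplit] at this
    have h00 : f ((0 : ℝ), (0 : Matrix (Fin m) (Fin m) ℝ)) = 0 := map_zero f
    linarith
  have hμpos : 0 < μ := by
    refine lt_of_le_of_ne hμ0 fun h => ?_
    have h1 := hfC' (-1) _ (by norm_num) ((posDef_iff_quadPos (hsym b₀)).1 hb₀)
    have h2 := hfT' b₀
    rw [hsplit, ← h] at h1 h2
    linarith
  have hrep : ∀ A : Matrix (Fin m) (Fin m) ℝ,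
      f (0, A) = ∑ i, ∑ j, A i j * f (0, Matrix.single i j 1) := by
    intro A
    have hF : ∀ A, f ((0 : ℝ), A) =
      (f.toLinearMap ∘ₗ LinearMap.inr ℝ ℝ (Matrix (Fin m) (Fin m) ℝ)) A := fun A => rfl
    simp only [hF]
    conv_lhs => rw [matrix_eq_sum_single A]
    simp only [map_sum]
    refine Finset.sum_congr rfl fun i _ => Finset.sum_congr rfl fun j _ => ?_
    rw [← smul_eq_mul, ← map_smul, smul_single, smul_eq_mul, mul_one]
  -- The functional only matters on symmetric matrices, so its matrix can be symmetrised.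
  let Λ : Matrix (Fin m) (Fin m) ℝ := Matrix.of fun i j =>
    -(f (0, Matrix.single i j 1) + f (0, Matrix.single j i 1)) / (2 * μ)
  have hΛ : ∀ A : Matrix (Fin m) (Fin m) ℝ, A.IsSymm → f (0, A) = -(μ * (A * Λ).trace) := by
    intro A hA
    have e1 : (A * Λ).trace = ∑ i, ∑ j, A i j * Λ j i := by
      simp [trace, mul_apply]
    have e2 : f (0, A) = ∑ i, ∑ j, A i j * f (0, Matrix.single j i 1) := by
      rw [hrep, Finset.sum_comm]
      refine Finset.sum_congr rfl fun i _ => Finset.sum_congr rfl fun j _ => ?_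
      rw [hA.apply]
    have e3 : 2 * f (0, A) = ∑ i, ∑ j, A i j *
        (f (0, Matrix.single i j 1) + f (0, Matrix.single j i 1)) := by
      simp only [mul_add, Finset.sum_add_distrib]
      rw [← e2, ← hrep]; ring
    have e4 : 2 * (-(μ * (A * Λ).trace)) = ∑ i, ∑ j, A i j *
        (f (0, Matrix.single i j 1) + f (0, Matrix.single j i 1)) := by
      rw [e1, ← mul_neg, ← mul_assoc, ← Finset.sum_neg_distrib, Finset.mul_sum]
      refine Finset.sum_congr rfl fun i _ => ?_
      rw [← Finset.sum_neg_distrib, Finset.mul_sum]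
      refine Finset.sum_congr rfl fun j _ => ?_
      simp only [Λ, of_apply]
      field_simp
      ring
    linarith
  have hΛs : Λ.IsSymm := by
    ext i j
    simp [Λ, add_comm]
  have hΛp : Λ.PosSemidef := by
    refine PosSemidef.of_dotProduct_mulVec_nonneg
      (by rw [IsHermitian, conjTranspose_eq_transpose_of_trivial]; exact hΛs) fun v => ?_
    have hv := posSemidef_vecMulVec_self_star v
    have h1 := hcl 0 (vecMulVec v v) le_rfl fun w => by
      simpa using hv.dotProduct_mulVec_nonneg w
    rw [hΛ _ (by ext i j; simp [vecMulVec_apply, mul_comm]), vecMulVec_mul, trace_vecMulVec,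
      dotProduct_comm, ← dotProduct_mulVec] at h1
    have h2 : 0 ≤ μ * (v ⬝ᵥ (Λ *ᵥ v)) := by linarith
    simpa using nonneg_of_mul_nonneg_right h2 hμpos
  have haff : ∀ b, 0 ≤ (P * Λ).trace + (g ⬝ᵥ b + (D b * Λ).trace) := by
    intro b
    have h1 := hu.trans (hfT' b)
    rw [hsplit, hΛ _ (hsym b), Matrix.neg_mul, Matrix.add_mul, trace_neg, trace_add] at h1
    have h2 : 0 ≤ μ * ((P * Λ).trace + (g ⬝ᵥ b + (D b * Λ).trace)) := by linarith
    exact nonneg_of_mul_nonneg_right h2 hμpos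
  refine ⟨Λ, hΛs, hΛp, fun b => ?_, ?_⟩
  · by_contra hne
    have h1 := haff ((-((P * Λ).trace + 1) / (g ⬝ᵥ b + (D b * Λ).trace)) • b)
    rw [map_smul, Matrix.smul_mul, trace_smul, dotProduct_smul, smul_eq_mul, smul_eq_mul,
      ← mul_add, div_mul_cancel₀ _ hne] at h1
    linarith
  · have h1 := haff 0
    simp only [dotProduct_zero, map_zero, Matrix.zero_mul, trace_zero, add_zero] at h1
    have := mul_eq_zero_of_trace_nonpos hΛp hPn (by
      rw [Matrix.mul_neg, trace_neg, trace_mul_comm]; linarith)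
    simpa using this

/-- The derivative at `x` of the constraint map `x ↦ p(x, xxᵀ)`. -/
def derivMap {n m : ℕ} (K : Fin n → Matrix (Fin m) (Fin m) ℝ)
    (L : Fin n → Fin n → Matrix (Fin m) (Fin m) ℝ) (x : Fin n → ℝ) :
    (Fin n → ℝ) →ₗ[ℝ] Matrix (Fin m) (Fin m) ℝ where
  toFun b := ∑ k, b k • (K k + deltaMat L k x)
  map_add' a b := by simp only [Pi.add_apply, add_smul, Finset.sum_add_distrib]
  map_smul' a b := by simp only [Finset.smul_sum, smul_smul]; rfl

lemma isSymm_sum {ι : Type*} {m : ℕ} (s : Finset ι) (A : ι → Matrix (Fin m) (Fin m) ℝ)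
    (h : ∀ i, (A i).IsSymm) : (∑ i ∈ s, A i).IsSymm := by
  rw [IsSymm, transpose_sum]
  exact Finset.sum_congr rfl fun i _ => h i

/-- Exact second-order expansion of the pencil along a line. -/
lemma pencil_line {n m : ℕ} (F0 : Matrix (Fin m) (Fin m) ℝ)
    (K : Fin n → Matrix (Fin m) (Fin m) ℝ)
    (L : Fin n → Fin n → Matrix (Fin m) (Fin m) ℝ) (hLsy : ∀ i j, L i j = L j i)
    (x b : Fin n → ℝ) (t : ℝ) :
    pencil F0 K L (x + t • b) (vecMulVec (x + t • b) (x + t • b)) =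
      pencil F0 K L x (vecMulVec x x) + t • derivMap K L x b
        + (t ^ 2) • ∑ i, ∑ j, (b i * b j) • L i j := by
  have h1 : ∑ i, ∑ j, (x i * b j) • L i j = ∑ i, ∑ j, (b i * x j) • L i j := by
    rw [Finset.sum_comm]
    refine Finset.sum_congr rfl fun i _ => Finset.sum_congr rfl fun j _ => ?_
    rw [hLsy, mul_comm]
  have h2 : derivMap K L x b = ∑ k, b k • K k + (2 : ℝ) • ∑ i, ∑ j, (b i * x j) • L i j := by
    simp only [derivMap, LinearMap.coe_mk, AddHom.coe_mk, deltaMat, smul_add,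
      Finset.sum_add_distrib, Finset.smul_sum, smul_smul]
    congr 1
    refine Finset.sum_congr rfl fun i _ => Finset.sum_congr rfl fun j _ => ?_
    congr 1; ring
  have h3 : ∑ i, ∑ j, vecMulVec (x + t • b) (x + t • b) i j • L i j =
      ∑ i, ∑ j, (x i * x j) • L i j + t • ∑ i, ∑ j, (x i * b j) • L i j
      + t • ∑ i, ∑ j, (b i * x j) • L i j + (t ^ 2) • ∑ i, ∑ j, (b i * b j) • L i j := by
    simp only [Finset.smul_sum, ← Finset.sum_add_distrib]
    refine Finset.sum_congr rfl fun i _ => Finset.sum_congr rfl fun j _ => ?_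
    simp only [vecMulVec_apply, Pi.add_apply, Pi.smul_apply, smul_eq_mul]
    module
  have h4 : ∑ k, (x + t • b) k • K k = ∑ k, x k • K k + t • ∑ k, b k • K k := by
    simp only [Finset.smul_sum, ← Finset.sum_add_distrib]
    refine Finset.sum_congr rfl fun i _ => ?_
    simp only [Pi.add_apply, Pi.smul_apply, smul_eq_mul]
    module
  simp only [pencil]
  rw [h3, h4, h2, h1]
  simp only [vecMulVec_apply]
  module

lemma vecNorm_sq {k : ℕ} (u : Fin k → ℝ) : vecNorm u ^ 2 = u ⬝ᵥ u := by
  rw [vecNorm, Real.sq_sqrt (Finset.sum_nonneg fun i _ => sq_nonneg _)]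
  simp [dotProduct, sq]

lemma penObj_line {n : ℕ} (c xc : Fin n → ℝ) (η : ℝ) (x b : Fin n → ℝ) (t : ℝ) :
    penObj c xc η (x + t • b) =
      penObj c xc η x + t * ((c + (2 * η) • (x - xc)) ⬝ᵥ b) + t ^ 2 * (η * (b ⬝ᵥ b)) := by
  have : x + t • b - xc = (x - xc) + t • b := by abel
  simp only [penObj, vecNorm_sq, this, dotProduct_add, add_dotProduct, dotProduct_smul,
    smul_dotProduct, smul_eq_mul]
  rw [dotProduct_comm b (x - xc)]
  ring

lemma grad_nonneg_of_negDef {n m : ℕ} (F0 : Matrix (Fin m) (Fin m) ℝ)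
    (K : Fin n → Matrix (Fin m) (Fin m) ℝ)
    (L : Fin n → Fin n → Matrix (Fin m) (Fin m) ℝ)
    (hL : ∀ i j, (L i j).IsSymm) (hLsy : ∀ i j, L i j = L j i)
    (c xc : Fin n → ℝ) (η : ℝ) (x : Fin n → ℝ) (hopt : IsOptPen F0 K L c xc η x)
    (b : Fin n → ℝ)
    (hb : (-(pencil F0 K L x (vecMulVec x x) + derivMap K L x b)).PosDef) :
    0 ≤ (c + (2 * η) • (x - xc)) ⬝ᵥ b := by
  set P := pencil F0 K L x (vecMulVec x x) with hP
  set Q := ∑ i, ∑ j, (b i * b j) • L i j with hQ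
  set G := (c + (2 * η) • (x - xc)) ⬝ᵥ b with hG
  have hQs : Q.IsSymm := isSymm_sum _ _ fun i => isSymm_sum _ _ fun j => (hL i j).smul _
  have hbs : (-(P + derivMap K L x b)).IsSymm := by
    have := hb.isHermitian
    rwa [IsHermitian, conjTranspose_eq_transpose_of_trivial] at this
  have hq : ∀ᶠ t : ℝ in nhds 0, QuadPos (-(P + derivMap K L x b) - t • Q) := by
    have hc : Continuous fun t : ℝ => -(P + derivMap K L x b) - t • Q := by fun_prop
    refine hc.continuousAt.eventually ((isOpen_quadPos m).mem_nhds ?_)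
    simpa using (posDef_iff_quadPos hbs).1 hb
  have hev : ∀ᶠ t : ℝ in nhdsWithin 0 (Set.Ioi 0), 0 ≤ G + t * (η * (b ⬝ᵥ b)) := by
    filter_upwards [nhdsWithin_le_nhds hq, nhdsWithin_le_nhds (Iio_mem_nhds zero_lt_one),
      self_mem_nhdsWithin] with t ht ht1 ht0
    have ht0 : 0 < t := ht0
    have ht1 : t < 1 := ht1
    have hpd := (posDef_iff_quadPos (hbs.sub (hQs.smul t))).2 ht
    have hfeas : x + t • b ∈ feasSet F0 K L := by
      have h1 : -pencil F0 K L (x + t • b) (vecMulVec (x + t • b) (x + t • b)) =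
          (1 - t) • (-P) + t • (-(P + derivMap K L x b) - t • Q) := by
        rw [pencil_line F0 K L hLsy, ← hP, ← hQ]
        module
      change (-pencil F0 K L (x + t • b) (vecMulVec (x + t • b) (x + t • b))).PosSemidef
      rw [h1]
      have hPn : (-P).PosSemidef := hopt.1
      exact (hPn.smul (sub_nonneg.2 ht1.le)).add (hpd.posSemidef.smul ht0.le)
    have h2 := hopt.2 _ hfeas
    rw [penObj_line, ← hG] at h2
    have h3 : 0 ≤ t * (G + t * (η * (b ⬝ᵥ b))) := by linarith
    exact nonneg_of_mul_nonneg_right h3 ht0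
  have hlim : Filter.Tendsto (fun t : ℝ => G + t * (η * (b ⬝ᵥ b)))
      (nhdsWithin 0 (Set.Ioi 0)) (nhds G) := by
    have hc : Continuous fun t : ℝ => G + t * (η * (b ⬝ᵥ b)) := by fun_prop
    simpa using (hc.tendsto 0).mono_left nhdsWithin_le_nhds
  exact ge_of_tendsto hlim hev

theorem bmi_lemma_four {n m : ℕ} (hn : 0 < n) (hm : 0 < m)
    (F0 : Matrix (Fin m) (Fin m) ℝ)
    (K : Fin n → Matrix (Fin m) (Fin m) ℝ)
    (L : Fin n → Fin n → Matrix (Fin m) (Fin m) ℝ)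
    (hF0 : F0.IsSymm) (hK : ∀ k, (K k).IsSymm)
    (hL : ∀ i j, (L i j).IsSymm) (hLsy : ∀ i j, L i j = L j i)
    (c xc : Fin n → ℝ)
    (η : ℝ) (hη : 0 < η)
    (xs : Fin n → ℝ)
    (hopt : IsOptPen F0 K L c xc η xs)
    (hmfcq : MFCQ F0 K L xs) :
    ∃ Λ : Matrix (Fin m) (Fin m) ℝ, KKT F0 K L c xc η xs Λ := by
  obtain ⟨b₀, hb₀⟩ := hmfcq
  have hPn : (-pencil F0 K L xs (vecMulVec xs xs)).PosSemidef := hopt.1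
  have hP : (pencil F0 K L xs (vecMulVec xs xs)).IsSymm := by
    have := hPn.isHermitian.neg
    rwa [neg_neg, IsHermitian, conjTranspose_eq_transpose_of_trivial] at this
  have hD : ∀ b, (derivMap K L xs b).IsSymm := fun b => by
    simp only [derivMap, LinearMap.coe_mk, AddHom.coe_mk, deltaMat]
    exact isSymm_sum _ _ fun k => ((hK k).add
      ((isSymm_sum _ _ fun i => (hL k i).smul _).smul _)).smul _
  obtain ⟨Λ, hΛs, hΛp, hstat, hcomp⟩ := exists_multiplier _ hP hPn (derivMap K L xs) hD
    (c + (2 * η) • (xs - xc))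
    (grad_nonneg_of_negDef F0 K L hL hLsy c xc η xs hopt) b₀ hb₀
  refine ⟨Λ, hΛs, hΛp, ?_, hcomp⟩
  ext k
  have h1 := hstat (Pi.single k 1)
  have h2 : derivMap K L xs (Pi.single k 1) = K k + deltaMat L k xs := by
    simp [derivMap, Pi.single_apply, Finset.sum_add_distrib]
  have h3 : (∑ k, ((K k * Λ).trace) • (Pi.single k 1 : Fin n → ℝ)) k = (K k * Λ).trace := by
    simp [Finset.sum_apply, Pi.single_apply]
  have h4 : (deltaMat L k xs * Λ).trace = 2 * (alphaMat L Λ *ᵥ xs) k := by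
    simp only [deltaMat, Matrix.smul_mul, trace_smul, Matrix.sum_mul, trace_sum, smul_eq_mul,
      mulVec, dotProduct, alphaMat, of_apply]
    congr 1
    exact Finset.sum_congr rfl fun i _ => mul_comm _ _
  rw [h2, Matrix.add_mul, trace_add, h4, dotProduct_single, mul_one] at h1
  rw [Pi.add_apply, Pi.add_apply, h3, Pi.smul_apply, smul_eq_mul, Pi.zero_apply]
  linarith
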